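/- One has ∫_{θ=0}^{π/2} ∫_{φ=0}^{π/2} max{ (1 − sin θ) sin φ, sin θ sin φ + √(sin²θ sin²φ + cos²φ) } · sin φ dφ dθ = (π/4) · ( √2 + arccos(1/3) ). -/

import Mathlib

open Real
open MeasureTheory Set

lemma ftc_lint {F g : ℝ → ℝ} {a b : ℝ} (hab : a ≤ b) (hc : ContinuousOn F (Icc a b))
    (hd : ∀ x ∈ Ioo a b, HasDerivAt F (g x) x) (hn : ∀ x ∈ Ioo a b, 0 ≤ g x) :
    ∫⁻ x in Ioo a b, ENNReal.ofReal (g x) = ENNReal.ofReal (F b - F a) := by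
  have hi := intervalIntegral.integrableOn_deriv_of_nonneg hc hd hn
  have hi' : IntervalIntegrable g volume a b := (intervalIntegrable_iff_integrableOn_Ioc_of_le hab).2 hi
  have h1 := intervalIntegral.integral_eq_sub_of_hasDerivAt_of_le hab hc hd hi'
  rw [← h1, intervalIntegral.integral_of_le hab, integral_Ioc_eq_integral_Ioo]
  rw [ofReal_integral_eq_lintegral_ofReal (hi.mono_set Ioo_subset_Ioc_self)]
  exact (ae_restrict_iff' measurableSet_Ioo).2 (Filter.Eventually.of_forall hn)

lemma tonelli_swap {A B : Set ℝ} (hA : MeasurableSet A) (hB : MeasurableSet B)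
    {f : ℝ → ℝ → ENNReal} (hf : Measurable (Function.uncurry f)) {G H : ℝ → ℝ}
    (hG : ∀ s ∈ A, ∫⁻ t in B, f s t = ENNReal.ofReal (G s))
    (hH : ∀ t ∈ B, ∫⁻ s in A, f s t = ENNReal.ofReal (H t))
    (hG0 : ∀ s ∈ A, 0 ≤ G s) (hH0 : ∀ t ∈ B, 0 ≤ H t) (hi : IntegrableOn H B) :
    IntegrableOn G A ∧ ∫ s in A, G s = ∫ t in B, H t := by
  have hsw : ∫⁻ s in A, ∫⁻ t in B, f s t = ∫⁻ t in B, ∫⁻ s in A, f s t :=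
    lintegral_lintegral_swap hf.aemeasurable
  rw [setLIntegral_congr_fun hA hG, setLIntegral_congr_fun hB hH] at hsw
  have hHn : 0 ≤ᵐ[volume.restrict B] H :=
    (ae_restrict_iff' hB).2 (Filter.Eventually.of_forall hH0)
  have hGn : 0 ≤ᵐ[volume.restrict A] G :=
    (ae_restrict_iff' hA).2 (Filter.Eventually.of_forall hG0)
  rw [← ofReal_integral_eq_lintegral_ofReal hi hHn] at hsw
  have hm : Measurable (fun s => (∫⁻ t in B, f s t).toReal) :=
    (Measurable.lintegral_prod_right' (ν := volume.restrict B) hf).ennreal_toReal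
  have hGm : AEStronglyMeasurable G (volume.restrict A) := by
    refine ⟨_, hm.stronglyMeasurable, ?_⟩
    refine (ae_restrict_iff' hA).2 (Filter.Eventually.of_forall fun s hs => ?_)
    simp only
    rw [hG s hs, ENNReal.toReal_ofReal (hG0 s hs)]
  have hGi : IntegrableOn G A := by
    refine ⟨hGm, ?_⟩
    rw [hasFiniteIntegral_iff_ofReal hGn, hsw]
    exact ENNReal.ofReal_lt_top
  refine ⟨hGi, ?_⟩
  rw [integral_eq_lintegral_of_nonneg_ae hGn hGm, hsw,
    ENNReal.toReal_ofReal (setIntegral_nonneg hB hH0)]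

lemma lemA {k : ℝ} (hk : 0 < k) (hk1 : k ≤ 1) :
    IntegrableOn (fun t => (log (1 + k * cos t) - log (1 - k * cos t)) / (2 * cos t))
      (Ioo 0 (π / 2)) ∧
    ∫ t in Ioo 0 (π / 2), (log (1 + k * cos t) - log (1 - k * cos t)) / (2 * cos t)
      = π / 2 * arcsin k := by
  have hpi := Real.pi_pos
  have hcd : ∀ u ∈ Ioo 0 k, HasDerivAt (fun u => π / 2 * arcsin u) (π / 2 * (1 / √(1 - u ^ 2))) u := by
    intro u hu
    exact (hasDerivAt_arcsin (by linarith [hu.1]) (by linarith [hu.2])).const_mul _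
  have hcc : ContinuousOn (fun u => π / 2 * arcsin u) (Icc 0 k) := by fun_prop
  have hnn : ∀ u ∈ Ioo 0 k, 0 ≤ (π / 2 * (1 / √(1 - u ^ 2))) := fun u _ => by positivity
  have hi := intervalIntegral.integrableOn_deriv_of_nonneg hcc hcd hnn
  have hval : ∫ u in Ioo 0 k, (π / 2 * (1 / √(1 - u ^ 2))) = π / 2 * arcsin k := by
    rw [← integral_Ioc_eq_integral_Ioo, ← intervalIntegral.integral_of_le hk.le,
      intervalIntegral.integral_eq_sub_of_hasDerivAt_of_le hk.le hcc hcd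
        ((intervalIntegrable_iff_integrableOn_Ioc_of_le hk.le).2 hi)]
    simp
  rw [← hval]
  have hcos : ∀ t ∈ Ioo 0 (π / 2), 0 < cos t ∧ cos t < 1 := by
    intro t ht
    refine ⟨cos_pos_of_mem_Ioo ⟨by linarith [ht.1], ht.2⟩, ?_⟩
    have := cos_lt_cos_of_nonneg_of_le_pi_div_two le_rfl ht.2.le ht.1
    simpa using this
  refine tonelli_swap (f := fun t u => ENNReal.ofReal (1 / (1 - u ^ 2 * cos t ^ 2))) measurableSet_Ioo measurableSet_Ioo
    ?_ ?_ ?_ ?_ hnn (hi.mono_set Ioo_subset_Ioc_self)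
  · apply Measurable.ennreal_ofReal
    fun_prop
  · intro t ht
    obtain ⟨h0, h1⟩ := hcos t ht
    have key : ∀ u ∈ Icc 0 k, 0 < 1 + u * cos t ∧ 0 < 1 - u * cos t := by
      intro u hu
      have : u * cos t < 1 := by nlinarith [hu.1, hu.2]
      have := mul_nonneg hu.1 h0.le
      constructor <;> linarith
    rw [ftc_lint (F := fun u => (log (1 + u * cos t) - log (1 - u * cos t)) / (2 * cos t)) hk.le]
    · simp
    · refine ContinuousOn.div_const (ContinuousOn.sub ?_ ?_) _
      · exact ContinuousOn.log (by fun_prop) fun u hu => (key u hu).1.ne'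
      · exact ContinuousOn.log (by fun_prop) fun u hu => (key u hu).2.ne'
    · intro u hu
      obtain ⟨k1, k2⟩ := key u ⟨hu.1.le, hu.2.le⟩
      have d1 : HasDerivAt (fun u => 1 + u * cos t) (cos t) u := by
        simpa using ((hasDerivAt_id u).mul_const (cos t)).const_add 1
      have d2 : HasDerivAt (fun u => 1 - u * cos t) (-cos t) u := by
        simpa using ((hasDerivAt_id u).mul_const (cos t)).const_sub 1
      convert! ((d1.log k1.ne').sub (d2.log k2.ne')).div_const (2 * cos t) using 1
      have : 1 - u ^ 2 * cos t ^ 2 = (1 + u * cos t) * (1 - u * cos t) := by ring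
      rw [this]
      field_simp
      ring
    · intro u hu
      obtain ⟨k1, k2⟩ := key u ⟨hu.1.le, hu.2.le⟩
      have : 1 - u ^ 2 * cos t ^ 2 = (1 + u * cos t) * (1 - u * cos t) := by ring
      rw [this]
      positivity
  · intro u hu
    have hu1 : u < 1 := hu.2.trans_le hk1
    have hu2 : 0 < 1 - u ^ 2 := by nlinarith [hu.1]
    set κ := √(1 - u ^ 2) with hκ
    have hκ0 : 0 < κ := Real.sqrt_pos.2 hu2
    have hκ2 : κ ^ 2 = 1 - u ^ 2 := Real.sq_sqrt hu2.le
    have hden : ∀ t, 0 < κ * cos t ^ 2 + sin t ^ 2 := by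
      intro t
      rcases eq_or_ne (cos t) 0 with h | h
      · have := sin_sq_add_cos_sq t
        rw [h] at this ⊢
        nlinarith
      · positivity
    have hd3 : ∀ t, 1 - u ^ 2 * cos t ^ 2 = κ ^ 2 * cos t ^ 2 + sin t ^ 2 := by
      intro t; rw [hκ2, sin_sq]; ring
    have hden2 : ∀ t, 0 < κ ^ 2 * cos t ^ 2 + sin t ^ 2 := by
      intro t
      rw [← hd3]
      nlinarith [cos_sq_le_one t, sq_nonneg u]
    rw [ftc_lint (F := fun t => (t + arctan ((1 - κ) * (sin t * cos t) / (κ * cos t ^ 2 + sin t ^ 2))) / κ) (by positivity)]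
    · simp
      ring_nf
    · apply Continuous.continuousOn
      refine Continuous.div_const (continuous_id.add (continuous_arctan.comp ?_)) _
      exact Continuous.div (by fun_prop) (by fun_prop) fun t => (hden t).ne'
    · intro t _
      have dn : HasDerivAt (fun t => (1 - κ) * (sin t * cos t)) ((1 - κ) * (cos t * cos t + sin t * (- sin t))) t :=
        ((hasDerivAt_sin t).mul (hasDerivAt_cos t)).const_mul _
      have dd : HasDerivAt (fun t => κ * cos t ^ 2 + sin t ^ 2) (κ * (2 * cos t * (- sin t)) + 2 * sin t * cos t) t := by
        convert! (((hasDerivAt_cos t).pow 2).const_mul κ).add ((hasDerivAt_sin t).pow 2) using 1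
        simp
      convert! ((hasDerivAt_id t).add (dn.div dd (hden t).ne').arctan).div_const κ using 1
      have h1 := hden t
      have h2 := hden2 t
      rw [hd3]
      have e : 1 + ((1 - κ) * (sin t * cos t) / (κ * cos t ^ 2 + sin t ^ 2)) ^ 2 =
        (κ ^ 2 * cos t ^ 2 + sin t ^ 2) / (κ * cos t ^ 2 + sin t ^ 2) ^ 2 := by
        rw [eq_div_iff (by positivity)]
        field_simp
        have := sin_sq_add_cos_sq t
        have hs : sin t ^ 2 = 1 - cos t ^ 2 := by linarith
        have hs4 : sin t ^ 4 = (1 - cos t ^ 2) ^ 2 := by rw [← hs]; ring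
        ring_nf
        rw [hs4, hs]
        ring
      simp only [Pi.div_apply]
      rw [e]
      field_simp
      have hs : cos t ^ 2 = 1 - sin t ^ 2 := by linarith [sin_sq_add_cos_sq t]
      ring_nf
      rw [show cos t ^ 4 = (cos t ^ 2) ^ 2 by ring, hs]
      ring
    · intro t _
      rw [hd3]
      have := hden2 t
      positivity
  · intro t ht
    obtain ⟨h0, h1⟩ := hcos t ht
    apply div_nonneg _ (by linarith)
    rw [sub_nonneg]
    apply log_le_log
    · nlinarith
    · nlinarith
lemma hasDeriv_W {s c φ : ℝ} (hs : 0 < s) (hc : 0 < c) (h1 : s ^ 2 + c ^ 2 = 1) (hφ : 0 ≤ cos φ) :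
    HasDerivAt (fun φ => (cos φ * √(s ^ 2 * sin φ ^ 2 + cos φ ^ 2)
      + s ^ 2 / c * log (√(s ^ 2 * sin φ ^ 2 + cos φ ^ 2) + c * cos φ)) / 2)
      (-(sin φ * √(s ^ 2 * sin φ ^ 2 + cos φ ^ 2))) φ := by
  have hpos : 0 < s ^ 2 * sin φ ^ 2 + cos φ ^ 2 := by
    rcases eq_or_ne (cos φ) 0 with h | h
    · have := sin_sq_add_cos_sq φ
      rw [h] at this ⊢
      have : sin φ ^ 2 = 1 := by nlinarith
      rw [this]; positivity
    · positivity
  have dR0 : HasDerivAt (fun φ => s ^ 2 * sin φ ^ 2 + cos φ ^ 2)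
      (s ^ 2 * (2 * sin φ * cos φ) + 2 * cos φ * (- sin φ)) φ := by
    convert! (((hasDerivAt_sin φ).pow 2).const_mul (s ^ 2)).add ((hasDerivAt_cos φ).pow 2) using 1
    simp
  have dR := dR0.sqrt hpos.ne'
  have hR0 := Real.sqrt_pos.2 hpos
  have hR2 := Real.sq_sqrt hpos.le
  set R := √(s ^ 2 * sin φ ^ 2 + cos φ ^ 2) with hR
  have hL : 0 < R + c * cos φ := by positivity
  have dL := (dR.add ((hasDerivAt_cos φ).const_mul c)).log hL.ne'
  convert! (((hasDerivAt_cos φ).mul dR).add (dL.const_mul (s ^ 2 / c))).div_const 2 using 1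
  simp only [Pi.add_apply, ← hR]
  have e1 : s ^ 2 * (2 * sin φ * cos φ) + 2 * cos φ * (- sin φ) = - 2 * c ^ 2 * (sin φ * cos φ) := by
    linear_combination (2 * sin φ * cos φ) * h1
  rw [e1]
  have hR2' : R ^ 2 = s ^ 2 + c ^ 2 * cos φ ^ 2 := by
    rw [hR2, sin_sq]; linear_combination (- cos φ ^ 2) * h1
  have e2 : (-2 * c ^ 2 * (sin φ * cos φ) / (2 * R) + c * -sin φ) / (R + c * cos φ) = - c * sin φ / R := by
    field_simp
    ring
  rw [e2]
  field_simp
  linear_combination (-sin φ) * hR2'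

lemma cos_nonneg_I {φ : ℝ} (h : φ ∈ Icc 0 (π / 2)) : 0 ≤ cos φ :=
  cos_nonneg_of_mem_Icc ⟨by linarith [h.1, Real.pi_pos], h.2⟩

lemma sin_nonneg_I {φ : ℝ} (h : φ ∈ Icc 0 (π / 2)) : 0 ≤ sin φ :=
  sin_nonneg_of_nonneg_of_le_pi h.1 (by linarith [h.2, Real.pi_pos])

lemma intR {s c a b : ℝ} (hs : 0 < s) (hc : 0 < c) (h1 : s ^ 2 + c ^ 2 = 1)
    (ha : 0 ≤ a) (hab : a ≤ b) (hb : b ≤ π / 2) :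
    ∫ φ in a..b, sin φ * √(s ^ 2 * sin φ ^ 2 + cos φ ^ 2) =
     (cos a * √(s ^ 2 * sin a ^ 2 + cos a ^ 2)
      + s ^ 2 / c * log (√(s ^ 2 * sin a ^ 2 + cos a ^ 2) + c * cos a)) / 2 -
     (cos b * √(s ^ 2 * sin b ^ 2 + cos b ^ 2)
      + s ^ 2 / c * log (√(s ^ 2 * sin b ^ 2 + cos b ^ 2) + c * cos b)) / 2 := by
  have := intervalIntegral.integral_eq_sub_of_hasDerivAt (a := a) (b := b)
    (fun φ hφ => hasDeriv_W (φ := φ) hs hc h1 (cos_nonneg_I (by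
      rw [uIcc_of_le hab] at hφ; exact ⟨ha.trans hφ.1, hφ.2.trans hb⟩)))
    (Continuous.intervalIntegrable (by fun_prop) _ _)
  rw [intervalIntegral.integral_neg] at this
  linarith

/-- the g2 part -/
lemma innerQ {s c : ℝ} (hs : 0 < s) (hc : 0 < c) (h1 : s ^ 2 + c ^ 2 = 1) :
    ∫ φ in (0:ℝ)..(π / 2), (s * sin φ + √(s ^ 2 * sin φ ^ 2 + cos φ ^ 2)) * sin φ =
      s * (π / 4) + (1 + s ^ 2 / c * (log (1 + c) - log s)) / 2 := by
  have hr := intR hs hc h1 le_rfl (by positivity : 0 ≤ π / 2) le_rfl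
  have e : ∀ φ, (s * sin φ + √(s ^ 2 * sin φ ^ 2 + cos φ ^ 2)) * sin φ
    = s * sin φ ^ 2 + sin φ * √(s ^ 2 * sin φ ^ 2 + cos φ ^ 2) := fun φ => by ring
  simp_rw [e]
  rw [intervalIntegral.integral_add (Continuous.intervalIntegrable (by fun_prop) _ _)
    (Continuous.intervalIntegrable (by fun_prop) _ _), hr, intervalIntegral.integral_const_mul,
    integral_sin_sq]
  simp [Real.sqrt_sq hs.le]
  ring

lemma cont_param (f : ℝ → ℝ → ℝ) (hf : Continuous (Function.uncurry f)) :
    Continuous fun θ => ∫ φ in (0:ℝ)..(π / 2), f θ φ :=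
  intervalIntegral.continuous_parametric_intervalIntegral_of_continuous' hf _ _

lemma sc_pos {θ : ℝ} (h : θ ∈ Ioo 0 (π / 2)) : 0 < sin θ ∧ 0 < cos θ :=
  ⟨sin_pos_of_pos_of_lt_pi h.1 (by linarith [h.2, Real.pi_pos]),
    cos_pos_of_mem_Ioo ⟨by linarith [h.1, Real.pi_pos], h.2⟩⟩

lemma partQ : ∫ θ in (0:ℝ)..(π / 2), ∫ φ in (0:ℝ)..(π / 2),
    (sin θ * sin φ + √(sin θ ^ 2 * sin φ ^ 2 + cos φ ^ 2)) * sin φ = π / 4 + π ^ 2 / 8 := by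
  have hpi : 0 ≤ π / 2 := by positivity
  obtain ⟨hA1, hA2⟩ := lemA one_pos le_rfl
  simp only [one_mul, arcsin_one] at hA1 hA2
  set Q := fun θ => ∫ φ in (0:ℝ)..(π / 2),
    (sin θ * sin φ + √(sin θ ^ 2 * sin φ ^ 2 + cos φ ^ 2)) * sin φ with hQ
  have hQc : Continuous Q := cont_param _ (by unfold Function.uncurry; fun_prop)
  set N := fun t => (log (1 + cos t) - log (1 - cos t)) / (2 * cos t) with hN
  have hAi : IntervalIntegrable N volume 0 (π / 2) :=
    (intervalIntegrable_iff_integrableOn_Ioo_of_le hpi).2 hA1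
  have hAv : ∫ t in (0:ℝ)..(π / 2), N t = π / 2 * (π / 2) := by
    rw [intervalIntegral.integral_of_le hpi, integral_Ioc_eq_integral_Ioo, hA2]
  have key := intervalIntegral.integral_eq_sub_of_hasDerivAt_of_le
    (f := fun θ => - cos θ * (π / 4) - (sin θ * log (1 + cos θ) - sin θ * log (sin θ)) / 2)
    (f' := fun θ => Q θ - N θ / 2) hpi ?_ ?_
    ((hQc.intervalIntegrable _ _).sub (hAi.div_const 2))
  · rw [intervalIntegral.integral_sub (hQc.intervalIntegrable _ _) (hAi.div_const 2),
      intervalIntegral.integral_div, hAv] at key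
    simp at key
    linarith
  · refine ContinuousOn.sub (by fun_prop) (ContinuousOn.div_const (ContinuousOn.sub ?_ ?_) _)
    · refine ContinuousOn.mul (by fun_prop) (ContinuousOn.log (by fun_prop) ?_)
      intro x hx
      have := cos_nonneg_I hx
      positivity
    · exact (continuous_mul_log.comp continuous_sin).continuousOn
  · intro θ hθ
    obtain ⟨hs, hc⟩ := sc_pos hθ
    have h1 := sin_sq_add_cos_sq θ
    have hc1 : 0 < 1 - cos θ := by nlinarith
    simp only [hQ, hN]
    rw [innerQ hs hc h1]
    have hlog : log (1 - cos θ) = 2 * log (sin θ) - log (1 + cos θ) := by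
      have : 1 - cos θ = sin θ ^ 2 / (1 + cos θ) := by
        rw [eq_div_iff (by positivity)]; linarith
      rw [this, log_div (by positivity) (by positivity), log_pow]; simp
    rw [hlog]
    have d1 := (hasDerivAt_sin θ).mul (((hasDerivAt_cos θ).const_add 1).log (by positivity))
    have d2 := (hasDerivAt_sin θ).mul ((hasDerivAt_sin θ).log hs.ne')
    convert! ((hasDerivAt_cos θ).neg.mul_const (π / 4)).sub ((d1.sub d2).div_const 2) using 1
    have hs2 : sin θ ^ 2 = (1 + cos θ) * (1 - cos θ) := by linarith
    field_simp
    rw [hs2]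
    ring
/-- inverse hyperbolic tangent part -/
noncomputable def AA (s σ k : ℝ) : ℝ :=
  (log (1 - s * σ + (1 - s ^ 2) * k) - log (1 - s * σ - (1 - s ^ 2) * k)) / 2

lemma den_id {s σ k : ℝ} (h : σ ^ 2 + k ^ 2 = 1) :
    (1 - s * σ + (1 - s ^ 2) * k) * (1 - s * σ - (1 - s ^ 2) * k)
      = (σ - s) ^ 2 + s ^ 2 * (1 - s ^ 2) * k ^ 2 := by
  linear_combination (-(1 - s ^ 2)) * h

lemma B_pos {s σ k : ℝ} (h : σ ^ 2 + k ^ 2 = 1) (hs : 0 ≤ s) (hs1 : s < 1) (hk : 0 ≤ k)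
    (hsσ : s < σ) : 0 < 1 - s * σ + (1 - s ^ 2) * k ∧ 0 < 1 - s * σ - (1 - s ^ 2) * k := by
  have hσ : σ ≤ 1 := by nlinarith
  have h1 : 0 < 1 - s * σ := by nlinarith
  have h2 : 0 ≤ (1 - s ^ 2) * k := mul_nonneg (by nlinarith) hk
  have h3 : 0 < 1 - s * σ + (1 - s ^ 2) * k := by linarith
  refine ⟨h3, ?_⟩
  have h4 : 0 < (1 - s * σ + (1 - s ^ 2) * k) * (1 - s * σ - (1 - s ^ 2) * k) := by
    rw [den_id h]
    have : 0 < (σ - s) ^ 2 := by have := sub_pos.2 hsσ; positivity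
    have : 0 ≤ s ^ 2 * (1 - s ^ 2) * k ^ 2 :=
      mul_nonneg (mul_nonneg (sq_nonneg _) (by nlinarith)) (sq_nonneg _)
    linarith
  exact (pos_iff_pos_of_mul_pos h4).1 h3

lemma dAA_t {s t : ℝ} (hs : 0 ≤ s) (hs1 : s < 1) (hk : 0 ≤ cos t) (hσ : s < sin t) :
    HasDerivAt (fun t => AA s (sin t) (cos t))
      ((1 - s ^ 2) * (s - sin t) / ((sin t - s) ^ 2 + s ^ 2 * (1 - s ^ 2) * cos t ^ 2)) t := by
  have h := sin_sq_add_cos_sq t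
  obtain ⟨b1, b2⟩ := B_pos h hs hs1 hk hσ
  rw [← den_id h]
  have d0 := ((hasDerivAt_sin t).const_mul s).const_sub 1
  have dk := (hasDerivAt_cos t).const_mul (1 - s ^ 2)
  convert! (((d0.add dk).log b1.ne').sub ((d0.sub dk).log b2.ne')).div_const 2 using 1
  simp only [Pi.add_apply, Pi.sub_apply]
  have e : cos t ^ 2 = 1 - sin t ^ 2 := by linarith
  rw [div_sub_div _ _ b1.ne' b2.ne', div_div, div_eq_div_iff (by positivity) (by positivity)]
  linear_combination (-2 * s * (1 - s ^ 2)) * ((1 - s * sin t + (1 - s ^ 2) * cos t) * (1 - s * sin t - (1 - s ^ 2) * cos t)) * h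

lemma dAA_s {θ σ k : ℝ} (h : σ ^ 2 + k ^ 2 = 1) (hs : 0 ≤ sin θ) (hs1 : sin θ < 1) (hk : 0 ≤ k)
    (hσ : sin θ < σ) :
    HasDerivAt (fun θ => AA (sin θ) σ k)
      (k * (cos θ * (σ * (1 + sin θ ^ 2) - 2 * sin θ)) /
        ((σ - sin θ) ^ 2 + sin θ ^ 2 * (1 - sin θ ^ 2) * k ^ 2)) θ := by
  obtain ⟨b1, b2⟩ := B_pos h hs hs1 hk hσ
  rw [← den_id h]
  have d0 := ((hasDerivAt_sin θ).mul_const σ).const_sub 1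
  have dk := (((hasDerivAt_sin θ).pow 2).const_sub 1).mul_const k
  convert! (((d0.add dk).log b1.ne').sub ((d0.sub dk).log b2.ne')).div_const 2 using 1
  simp only [Pi.add_apply, Pi.sub_apply, Pi.pow_apply]
  rw [div_sub_div _ _ b1.ne' b2.ne', div_div, div_eq_div_iff (by positivity) (by positivity)]
  push_cast
  ring

lemma AA_cont {X : Type*} [TopologicalSpace X] {S : Set X} {f g k : X → ℝ} (hf : ContinuousOn f S)
    (hg : ContinuousOn g S) (hk : ContinuousOn k S)
    (h1 : ∀ x ∈ S, 0 < 1 - f x * g x + (1 - f x ^ 2) * k x ∧ 0 < 1 - f x * g x - (1 - f x ^ 2) * k x) :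
    ContinuousOn (fun x => AA (f x) (g x) (k x)) S := by
  unfold AA
  refine ContinuousOn.div_const (ContinuousOn.sub ?_ ?_) _
  · exact ContinuousOn.log (by fun_prop) fun x hx => (h1 x hx).1.ne'
  · exact ContinuousOn.log (by fun_prop) fun x hx => (h1 x hx).2.ne'

noncomputable def qq (s : ℝ) : ℝ := √((1 - s) * (1 - 3 * s))

noncomputable def gg (s c : ℝ) : ℝ :=
  log (1 - 2 * s + c * qq s) - log s - log (2 - 4 * s + 3 * s ^ 2) / 2

lemma qq_sq {s : ℝ} (h : s ≤ 1 / 3) : qq s ^ 2 = (1 - s) * (1 - 3 * s) :=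
  Real.sq_sqrt (mul_nonneg (by linarith) (by linarith))

lemma qq_nonneg (s : ℝ) : 0 ≤ qq s := Real.sqrt_nonneg _

lemma AA_start {s c : ℝ} (hs : 0 < s) (hs1 : s < 1 / 3) (hc : 0 < c) (h : s ^ 2 + c ^ 2 = 1) :
    √(1 - (2 * s / (1 - s)) ^ 2) = c * qq s / (1 - s) ^ 2 ∧
    AA s (2 * s / (1 - s)) (c * qq s / (1 - s) ^ 2) = gg s c := by
  have hq := qq_sq hs1.le
  have hq0 := qq_nonneg s
  have h1s : 0 < 1 - s := by linarith
  have hcq : 0 ≤ c * qq s := by positivity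
  have hcc : c ^ 2 = 1 - s ^ 2 := by linarith
  constructor
  · rw [Real.sqrt_eq_iff_eq_sq (by rw [sub_nonneg, div_pow, div_le_one (by positivity)]; nlinarith) (by positivity)]
    field_simp
    linear_combination (-qq s ^ 2) * hcc + (-(1 - s ^ 2)) * hq
  · have e1 : 1 - s * (2 * s / (1 - s)) + (1 - s ^ 2) * (c * qq s / (1 - s) ^ 2)
        = (1 + s) / (1 - s) * (1 - 2 * s + c * qq s) := by
      field_simp; ring
    have e2 : 1 - s * (2 * s / (1 - s)) - (1 - s ^ 2) * (c * qq s / (1 - s) ^ 2)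
        = (1 + s) / (1 - s) * (1 - 2 * s - c * qq s) := by
      field_simp; ring
    have hd : 0 < 2 - 4 * s + 3 * s ^ 2 := by nlinarith
    have e3 : 1 - 2 * s - c * qq s = s ^ 2 * (2 - 4 * s + 3 * s ^ 2) / (1 - 2 * s + c * qq s) := by
      rw [eq_div_iff (by linarith)]
      linear_combination (- qq s ^ 2) * hcc + (-(1 - s ^ 2)) * hq
    have hp : 0 < 1 - 2 * s + c * qq s := by linarith
    have hr : 0 < (1 + s) / (1 - s) := by positivity
    unfold AA gg
    rw [e1, e2, e3, log_mul hr.ne' hp.ne', log_mul hr.ne' (by positivity),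
      log_div (by positivity) hp.ne', log_mul (by positivity) hd.ne', log_pow]
    push_cast
    ring
lemma ftc_le {F g : ℝ → ℝ} {a b : ℝ} (hab : a ≤ b) (hc : ContinuousOn F (Icc a b))
    (hd : ∀ x ∈ Ioo a b, HasDerivAt F (g x) x) (hn : ∀ x ∈ Ioo a b, 0 ≤ g x) :
    0 ≤ F b - F a := by
  have hi := intervalIntegral.integrableOn_deriv_of_nonneg hc hd hn
  have hi' : IntervalIntegrable g volume a b := (intervalIntegrable_iff_integrableOn_Ioc_of_le hab).2 hi
  have h1 := intervalIntegral.integral_eq_sub_of_hasDerivAt_of_le hab hc hd hi'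
  rw [← h1, intervalIntegral.integral_of_le hab, integral_Ioc_eq_integral_Ioo]
  exact setIntegral_nonneg measurableSet_Ioo hn

noncomputable def KK (θ t : ℝ) : ℝ :=
  cos θ * (sin t * (1 + sin θ ^ 2) - 2 * sin θ) /
    ((sin t - sin θ) ^ 2 + sin θ ^ 2 * (1 - sin θ ^ 2) * cos t ^ 2)

lemma KK_nonneg {θ t : ℝ} (hs : 0 ≤ sin θ) (hσ : 0 ≤ sin t) (hc : 0 ≤ cos θ)
    (h : 2 * sin θ ≤ sin t * (1 - sin θ)) : 0 ≤ KK θ t := by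
  unfold KK
  refine div_nonneg (mul_nonneg hc ?_) (add_nonneg (sq_nonneg _) (mul_nonneg (mul_nonneg (sq_nonneg _) ?_) (sq_nonneg _)))
  · nlinarith [mul_nonneg hσ hs, mul_nonneg hσ (sq_nonneg (sin θ))]
  · nlinarith [sin_sq_le_one θ]

lemma th_bounds {θ : ℝ} (h : θ ∈ Ioo 0 (arcsin (1 / 3))) :
    0 < sin θ ∧ sin θ < 1 / 3 ∧ 0 < cos θ ∧ θ < π / 2 := by
  have h2 : θ < π / 2 := h.2.trans_le (arcsin_le_pi_div_two _)
  obtain ⟨a, b⟩ := sc_pos ⟨h.1, h2⟩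
  refine ⟨a, ?_, b, h2⟩
  exact (lt_arcsin_iff_sin_lt ⟨by linarith [h.1, Real.pi_pos], h2.le⟩ ⟨by norm_num, by norm_num⟩).1 h.2

lemma fix_theta {θ : ℝ} (hθ : θ ∈ Ioo 0 (arcsin (1 / 3))) :
    (∫⁻ t in Ioo (arcsin (2 * sin θ / (1 - sin θ))) (π / 2), ENNReal.ofReal (KK θ t)) =
      ENNReal.ofReal (gg (sin θ) (cos θ) / cos θ - arctan (qq (sin θ))) ∧
    0 ≤ gg (sin θ) (cos θ) / cos θ - arctan (qq (sin θ)) := by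
  obtain ⟨hs, hs1, hc, hθ2⟩ := th_bounds hθ
  have h1 := sin_sq_add_cos_sq θ
  set s := sin θ with hsdef
  set c := cos θ with hcdef
  have hcc : 1 - s ^ 2 = c ^ 2 := by linarith
  have h1s : 0 < 1 - s := by linarith
  set x := 2 * s / (1 - s) with hx
  have hx0 : 0 < x := by positivity
  have hx1 : x ≤ 1 := by rw [hx, div_le_one h1s]; linarith
  have hxs : s < x := by rw [hx, lt_div_iff₀ h1s]; nlinarith
  obtain ⟨e1, e2⟩ := AA_start hs hs1 hc h1
  have ht : ∀ t ∈ Icc (arcsin x) (π / 2), x ≤ sin t ∧ 0 ≤ cos t := by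
    intro t ht
    have h0 : 0 ≤ arcsin x := arcsin_nonneg.2 hx0.le
    have h5 : -(π / 2) ≤ t := by linarith [ht.1, Real.pi_pos]
    exact ⟨(arcsin_le_iff_le_sin ⟨by linarith, hx1⟩ ⟨h5, ht.2⟩).1 ht.1,
      cos_nonneg_I ⟨h0.trans ht.1, ht.2⟩⟩
  have hval : gg s c / c - arctan (qq s) =
    (fun t => arctan (s * c * cos t / (sin t - s)) - AA s (sin t) (cos t) / c) (π / 2) -
    (fun t => arctan (s * c * cos t / (sin t - s)) - AA s (sin t) (cos t) / c) (arcsin x) := by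
    simp only [sin_pi_div_two, cos_pi_div_two, sin_arcsin (by linarith : -1 ≤ x) hx1, cos_arcsin]
    rw [e1, e2]
    have : s * c * (c * qq s / (1 - s) ^ 2) / (x - s) = qq s := by
      have hxs' : x - s = s * (1 + s) / (1 - s) := by rw [hx]; field_simp; ring
      rw [hxs']
      field_simp
      rw [← hcc]; ring
    rw [this]
    simp [AA]
  have hcont : ContinuousOn (fun t => arctan (s * c * cos t / (sin t - s)) - AA s (sin t) (cos t) / c)
      (Icc (arcsin x) (π / 2)) := by
    refine ContinuousOn.sub ?_ (ContinuousOn.div_const ?_ _)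
    · refine continuous_arctan.comp_continuousOn (ContinuousOn.div (by fun_prop) (by fun_prop) ?_)
      intro t h
      linarith [(ht t h).1]
    · refine AA_cont (by fun_prop) (by fun_prop) (by fun_prop) ?_
      intro t h
      exact B_pos (sin_sq_add_cos_sq t) hs.le (by linarith) (ht t h).2 (by linarith [(ht t h).1])
  have hder : ∀ t ∈ Ioo (arcsin x) (π / 2), HasDerivAt
      (fun t => arctan (s * c * cos t / (sin t - s)) - AA s (sin t) (cos t) / c) (KK θ t) t := by
    intro t h
    obtain ⟨a1, a2⟩ := ht t ⟨h.1.le, h.2.le⟩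
    have hts : s < sin t := by linarith
    have hts' : 0 < sin t - s := by linarith
    have hh := sin_sq_add_cos_sq t
    have dz := ((hasDerivAt_cos t).const_mul (s * c)).div ((hasDerivAt_sin t).sub_const s) hts'.ne'
    convert! dz.arctan.sub ((dAA_t hs.le (by linarith) a2 hts).div_const c) using 1
    simp only [Pi.div_apply]
    unfold KK
    rw [← hsdef, ← hcdef, hcc]
    have hD : 0 < (sin t - s) ^ 2 + s ^ 2 * c ^ 2 * cos t ^ 2 := by positivity
    have e : 1 + (s * c * cos t / (sin t - s)) ^ 2 = ((sin t - s) ^ 2 + s ^ 2 * c ^ 2 * cos t ^ 2) / (sin t - s) ^ 2 := by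
      field_simp
    rw [e]
    field_simp
    linear_combination s * hh
  have hnn : ∀ t ∈ Ioo (arcsin x) (π / 2), 0 ≤ KK θ t := by
    intro t h
    obtain ⟨a1, a2⟩ := ht t ⟨h.1.le, h.2.le⟩
    refine KK_nonneg hs.le (by linarith) hc.le ?_
    rw [hx, div_le_iff₀ h1s] at a1
    exact a1
  rw [hval]
  exact ⟨ftc_lint (arcsin_le_pi_div_two _) hcont hder hnn, ftc_le (arcsin_le_pi_div_two _) hcont hder hnn⟩

lemma AA_diff {σ k : ℝ} (hσ : 0 < σ) (hk : 0 < k) (h : σ ^ 2 + k ^ 2 = 1) :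
    AA (σ / (2 + σ)) σ k - AA 0 σ k = (log (1 + 1 / 3 * k) - log (1 - 1 / 3 * k)) / 2 := by
  have hk1 : k < 1 := by nlinarith
  have e1 : 1 - σ / (2 + σ) * σ + (1 - (σ / (2 + σ)) ^ 2) * k
      = 3 * (1 + σ) / (2 + σ) ^ 2 * ((1 + 1 / 3 * k) * (1 + k)) := by
    field_simp
    linear_combination (- (1 + σ)) * h
  have e2 : 1 - σ / (2 + σ) * σ - (1 - (σ / (2 + σ)) ^ 2) * k
      = 3 * (1 + σ) / (2 + σ) ^ 2 * ((1 - 1 / 3 * k) * (1 - k)) := by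
    field_simp
    linear_combination (- (1 + σ)) * h
  have p1 : 0 < 1 - k := by linarith
  have p2 : 0 < 1 - 1 / 3 * k := by linarith
  unfold AA
  rw [e1, e2, log_mul (by positivity) (by positivity), log_mul (by positivity) (by positivity),
    log_mul (by positivity) (by positivity), log_mul (by positivity) (by positivity)]
  simp
  ring

lemma fix_t {t : ℝ} (ht : t ∈ Ioo 0 (π / 2)) :
    (∫⁻ θ in Ioo 0 (arcsin (sin t / (2 + sin t))), ENNReal.ofReal (KK θ t)) =
      ENNReal.ofReal ((log (1 + 1 / 3 * cos t) - log (1 - 1 / 3 * cos t)) / (2 * cos t)) := by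
  obtain ⟨hσ, hk⟩ := sc_pos ht
  have h := sin_sq_add_cos_sq t
  have hσ1 : sin t < 1 := by nlinarith
  set x := sin t / (2 + sin t) with hx
  have hx0 : 0 < x := by positivity
  have hx1 : x < 1 / 3 := by rw [hx, div_lt_div_iff₀ (by positivity) (by positivity)]; linarith
  have hxσ : x < sin t := by rw [hx, div_lt_iff₀ (by positivity)]; nlinarith
  have hth : ∀ θ ∈ Icc 0 (arcsin x), 0 ≤ sin θ ∧ sin θ ≤ x ∧ 0 ≤ cos θ := by
    intro θ h
    have h2 := h.2.trans (arcsin_le_pi_div_two x)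
    exact ⟨sin_nonneg_I ⟨h.1, h2⟩, (le_arcsin_iff_sin_le ⟨by linarith [h.1, Real.pi_pos], h2⟩ ⟨by linarith, by linarith⟩).1 h.2,
      cos_nonneg_I ⟨h.1, h2⟩⟩
  rw [ftc_lint (F := fun θ => AA (sin θ) (sin t) (cos t) / cos t) (arcsin_nonneg.2 hx0.le)]
  · simp only [sin_arcsin (by linarith : -1 ≤ x) (by linarith), sin_zero]
    rw [← sub_div, AA_diff hσ hk h, div_div]
  · refine ContinuousOn.div_const (AA_cont (by fun_prop) (by fun_prop) (by fun_prop) ?_) _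
    intro θ hθ
    obtain ⟨a, b, c⟩ := hth θ hθ
    exact B_pos h a (by linarith) hk.le (by linarith)
  · intro θ hθ
    obtain ⟨a, b, c⟩ := hth θ ⟨hθ.1.le, hθ.2.le⟩
    convert! (dAA_s h a (by linarith) hk.le (by linarith)).div_const (cos t) using 1
    unfold KK
    field_simp
  · intro θ hθ
    obtain ⟨a, b, c⟩ := hth θ ⟨hθ.1.le, hθ.2.le⟩
    refine KK_nonneg a hσ.le c ?_
    rw [hx, le_div_iff₀ (by positivity)] at b
    linarith

lemma lemB :
    IntegrableOn (fun θ => gg (sin θ) (cos θ) / cos θ - arctan (qq (sin θ)))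
      (Ioo 0 (arcsin (1 / 3))) ∧
    ∫ θ in Ioo 0 (arcsin (1 / 3)), (gg (sin θ) (cos θ) / cos θ - arctan (qq (sin θ)))
      = π / 2 * arcsin (1 / 3) := by
  obtain ⟨hA1, hA2⟩ := lemA (by norm_num : (0:ℝ) < 1 / 3) (by norm_num)
  rw [← hA2]
  refine tonelli_swap (f := fun θ t => {p : ℝ × ℝ | 2 * sin p.1 < sin p.2 * (1 - sin p.1)}.indicator
    (fun p => ENNReal.ofReal (KK p.1 p.2)) (θ, t)) measurableSet_Ioo measurableSet_Ioo
    ?_ ?_ ?_ ?_ ?_ hA1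
  · have : Measurable (fun p : ℝ × ℝ => ENNReal.ofReal (KK p.1 p.2)) := by
      apply Measurable.ennreal_ofReal
      unfold KK
      fun_prop
    exact this.indicator (measurableSet_lt (by fun_prop) (by fun_prop))
  · intro θ hθ
    rw [← (fix_theta hθ).1]
    obtain ⟨hs, hs1, hc, hθ2⟩ := th_bounds hθ
    have h1s : 0 < 1 - sin θ := by linarith
    have := setLIntegral_indicator (μ := volume) (s := {t : ℝ | 2 * sin θ < sin t * (1 - sin θ)}) (t := Ioo 0 (π / 2))
      (measurableSet_lt (by fun_prop) (by fun_prop)) (fun t => ENNReal.ofReal (KK θ t))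
    have hset : {t : ℝ | 2 * sin θ < sin t * (1 - sin θ)} ∩ Ioo 0 (π / 2) =
        Ioo (arcsin (2 * sin θ / (1 - sin θ))) (π / 2) := by
      have hx0 : 0 < 2 * sin θ / (1 - sin θ) := by positivity
      have hx1 : 2 * sin θ / (1 - sin θ) ≤ 1 := by rw [div_le_one h1s]; linarith
      ext t
      simp only [mem_inter_iff, mem_ofPred_eq, mem_Ioo, ← div_lt_iff₀ h1s]
      constructor
      · rintro ⟨h1, h2, h3⟩
        exact ⟨(arcsin_lt_iff_lt_sin ⟨by linarith, hx1⟩ ⟨by linarith [Real.pi_pos], h3.le⟩).2 h1, h3⟩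
      · rintro ⟨h1, h3⟩
        have h0 : 0 < t := (arcsin_pos.2 hx0).trans h1
        exact ⟨(arcsin_lt_iff_lt_sin ⟨by linarith, hx1⟩ ⟨by linarith [Real.pi_pos], h3.le⟩).1 h1, h0, h3⟩
    rw [hset] at this
    rw [← this]
    rfl
  · intro t ht
    rw [← fix_t ht]
    obtain ⟨hσ, hk⟩ := sc_pos ht
    have := setLIntegral_indicator (μ := volume) (s := {θ : ℝ | 2 * sin θ < sin t * (1 - sin θ)}) (t := Ioo 0 (arcsin (1 / 3)))
      (measurableSet_lt (by fun_prop) (by fun_prop)) (fun θ => ENNReal.ofReal (KK θ t))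
    have hset : {θ : ℝ | 2 * sin θ < sin t * (1 - sin θ)} ∩ Ioo 0 (arcsin (1 / 3)) =
        Ioo 0 (arcsin (sin t / (2 + sin t))) := by
      have hσ1 : sin t ≤ 1 := sin_le_one t
      have hx0 : 0 < sin t / (2 + sin t) := by positivity
      have hx1 : sin t / (2 + sin t) ≤ 1 / 3 := by
        rw [div_le_div_iff₀ (by positivity) (by positivity)]; linarith
      have hiff : ∀ θ, 2 * sin θ < sin t * (1 - sin θ) ↔ sin θ < sin t / (2 + sin t) := by
        intro θ
        rw [lt_div_iff₀ (by positivity)]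
        constructor <;> intro h <;> linarith
      ext θ
      simp only [mem_inter_iff, mem_ofPred_eq, mem_Ioo, hiff]
      constructor
      · rintro ⟨h1, h2, h3⟩
        have h4 := h3.trans_le (arcsin_le_pi_div_two _)
        exact ⟨h2, (lt_arcsin_iff_sin_lt ⟨by linarith [Real.pi_pos], h4.le⟩ ⟨by linarith, by linarith⟩).2 h1⟩
      · rintro ⟨h1, h3⟩
        have h4 := h3.trans_le (arcsin_le_pi_div_two _)
        exact ⟨(lt_arcsin_iff_sin_lt ⟨by linarith [Real.pi_pos], h4.le⟩ ⟨by linarith, by linarith⟩).1 h3, h1,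
          h3.trans_le (monotone_arcsin hx1)⟩
    rw [hset] at this
    rw [← this]
    rfl
  · intro θ hθ
    exact (fix_theta hθ).2
  · intro t ht
    obtain ⟨hσ, hk⟩ := sc_pos ht
    have := cos_le_one t
    apply div_nonneg _ (by linarith)
    rw [sub_nonneg]
    apply log_le_log <;> linarith
lemma max_zero_of_ge {s φ : ℝ} (hs : 1 / 3 ≤ s) (hφ : 0 ≤ sin φ) :
    max ((1 - s) * sin φ - (s * sin φ + √(s ^ 2 * sin φ ^ 2 + cos φ ^ 2))) 0 = 0 := by
  apply max_eq_right
  have : s * sin φ ≤ √(s ^ 2 * sin φ ^ 2 + cos φ ^ 2) := by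
    apply Real.le_sqrt_of_sq_le
    nlinarith [sq_nonneg (cos φ)]
  nlinarith

lemma innerD {s c : ℝ} (hs : 0 < s) (hs1 : s < 1 / 3) (hc : 0 < c) (h1 : s ^ 2 + c ^ 2 = 1) :
    ∫ φ in (0:ℝ)..(π / 2),
      max ((1 - s) * sin φ - (s * sin φ + √(s ^ 2 * sin φ ^ 2 + cos φ ^ 2))) 0 * sin φ =
    ((1 - 2 * s) * arctan (qq s) - s ^ 2 / c * gg s c) / 2 := by
  have hq := qq_sq hs1.le
  have hq0 := qq_nonneg s
  have hα0 : 0 ≤ arctan (qq s) := arctan_nonneg.2 hq0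
  have hα1 := arctan_lt_pi_div_two (qq s)
  have hca := cos_arctan_pos (qq s)
  have hsa : sin (arctan (qq s)) = qq s * cos (arctan (qq s)) := by
    rw [sin_arctan, cos_arctan]; ring
  set α := arctan (qq s) with hα
  have hcont : Continuous fun φ => max ((1 - s) * sin φ - (s * sin φ + √(s ^ 2 * sin φ ^ 2 + cos φ ^ 2))) 0 * sin φ := by
    fun_prop
  rw [← intervalIntegral.integral_add_adjacent_intervals (b := π / 2 - α)
    (hcont.intervalIntegrable _ _) (hcont.intervalIntegrable _ _)]
  have hcadd : ∀ φ, cos (φ + α) = cos α * (cos φ - qq s * sin φ) := by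
    intro φ; rw [cos_add, hsa]; ring
  have i1 : ∫ φ in (0:ℝ)..(π / 2 - α),
      max ((1 - s) * sin φ - (s * sin φ + √(s ^ 2 * sin φ ^ 2 + cos φ ^ 2))) 0 * sin φ = 0 := by
    rw [intervalIntegral.integral_congr (g := fun _ => (0:ℝ))]
    · simp
    intro φ hφ
    rw [uIcc_of_le (by linarith)] at hφ
    have hI : φ ∈ Icc 0 (π / 2) := ⟨hφ.1, by linarith [hφ.2]⟩
    have hsn := sin_nonneg_I hI
    have hp : 0 ≤ cos (φ + α) := cos_nonneg_I ⟨by linarith [hφ.1], by linarith [hφ.2]⟩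
    rw [hcadd] at hp
    have hp' : 0 ≤ cos φ - qq s * sin φ := nonneg_of_mul_nonneg_right hp hca
    have : (1 - 2 * s) * sin φ ≤ √(s ^ 2 * sin φ ^ 2 + cos φ ^ 2) := by
      apply Real.le_sqrt_of_sq_le
      have : (qq s * sin φ) ^ 2 ≤ cos φ ^ 2 := by
        apply pow_le_pow_left₀ (by positivity); linarith
      rw [mul_pow, hq] at this
      linarith
    simp only
    rw [max_eq_right (by linarith), zero_mul]
  have i2 : ∫ φ in (π / 2 - α)..(π / 2),
      max ((1 - s) * sin φ - (s * sin φ + √(s ^ 2 * sin φ ^ 2 + cos φ ^ 2))) 0 * sin φ =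
      ∫ φ in (π / 2 - α)..(π / 2), ((1 - 2 * s) * sin φ ^ 2 - sin φ * √(s ^ 2 * sin φ ^ 2 + cos φ ^ 2)) := by
    apply intervalIntegral.integral_congr
    intro φ hφ
    rw [uIcc_of_le (by linarith)] at hφ
    have hI : φ ∈ Icc 0 (π / 2) := ⟨by linarith [hφ.1], hφ.2⟩
    have hsn := sin_nonneg_I hI
    have hcn := cos_nonneg_I hI
    have hp : cos (φ + α) ≤ 0 := cos_nonpos_of_pi_div_two_le_of_le (by linarith [hφ.1]) (by linarith [hφ.2])
    rw [hcadd] at hp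
    have hp' : cos φ - qq s * sin φ ≤ 0 := nonpos_of_mul_nonpos_right hp hca
    have : √(s ^ 2 * sin φ ^ 2 + cos φ ^ 2) ≤ (1 - 2 * s) * sin φ := by
      apply Real.sqrt_le_iff.2 ⟨mul_nonneg (by linarith) hsn, ?_⟩
      have : cos φ ^ 2 ≤ (qq s * sin φ) ^ 2 := by
        apply pow_le_pow_left₀ hcn; linarith
      rw [mul_pow, hq] at this
      linarith
    simp only
    rw [max_eq_left (by linarith)]
    ring
  rw [i1, i2, intervalIntegral.integral_sub (Continuous.intervalIntegrable (by fun_prop) _ _)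
    (Continuous.intervalIntegrable (by fun_prop) _ _), intervalIntegral.integral_const_mul,
    integral_sin_sq, intR hs hc h1 (by linarith) (by linarith) le_rfl]
  have hd : 1 + qq s ^ 2 = 2 - 4 * s + 3 * s ^ 2 := by rw [hq]; ring
  have hd0 : 0 < 2 - 4 * s + 3 * s ^ 2 := by rw [← hd]; positivity
  have hcα : cos α ^ 2 * (1 + qq s ^ 2) = 1 := by
    rw [hα, cos_sq_arctan]; field_simp
  have hR : √(s ^ 2 * cos α ^ 2 + sin α ^ 2) = (1 - 2 * s) * cos α := by
    rw [hsa, Real.sqrt_eq_iff_eq_sq (by positivity) (mul_nonneg (by linarith) hca.le)]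
    linear_combination (cos α ^ 2) * hq
  have hlogc : log (cos α) = - log (2 - 4 * s + 3 * s ^ 2) / 2 := by
    have : log (cos α ^ 2 * (1 + qq s ^ 2)) = 0 := by rw [hcα, log_one]
    rw [log_mul (by positivity) (by positivity), log_pow, hd] at this
    push_cast at this
    linarith
  have hpos : 0 < 1 - 2 * s + c * qq s := by
    have : 0 ≤ c * qq s := by positivity
    linarith
  simp only [cos_pi_div_two_sub, sin_pi_div_two_sub, sin_pi_div_two, cos_pi_div_two]
  rw [hR, hsa, show (1 - 2 * s) * cos α + c * (qq s * cos α) = (1 - 2 * s + c * qq s) * cos α by ring,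
    log_mul hpos.ne' hca.ne', hlogc]
  simp only [one_pow, mul_one, ne_eq, OfNat.ofNat_ne_zero, not_false_eq_true, zero_pow, add_zero,
    Real.sqrt_sq hs.le, mul_zero, zero_mul]
  unfold gg
  ring

noncomputable def PP (w : ℝ) : ℝ :=
  -√2 * (arctan ((3 * w + 1) / (2 * √2)) + arctan ((3 * w - 1) / (2 * √2)))

lemma dPP (w : ℝ) : HasDerivAt PP (-24 * (1 + w ^ 2) / (9 * w ^ 4 + 14 * w ^ 2 + 9)) w := by
  have h2 : (0:ℝ) < √2 := by positivity
  have h22 : √2 ^ 2 = (2:ℝ) := Real.sq_sqrt (by norm_num)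
  have d1 : HasDerivAt (fun w : ℝ => (3 * w + 1) / (2 * √2)) (3 / (2 * √2)) w := by
    simpa using (((hasDerivAt_id w).const_mul 3).add_const 1).div_const (2 * √2)
  have d2 : HasDerivAt (fun w : ℝ => (3 * w - 1) / (2 * √2)) (3 / (2 * √2)) w := by
    simpa using (((hasDerivAt_id w).const_mul 3).sub_const 1).div_const (2 * √2)
  convert! (d1.arctan.add d2.arctan).const_mul (-√2) using 1
  have p1 : 0 < 8 + (3 * w + 1) ^ 2 := by positivity
  have p2 : 0 < 8 + (3 * w - 1) ^ 2 := by positivity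
  have e1 : 1 + ((3 * w + 1) / (2 * √2)) ^ 2 = (8 + (3 * w + 1) ^ 2) / 8 := by
    rw [div_pow, mul_pow, h22]; ring
  have e2 : 1 + ((3 * w - 1) / (2 * √2)) ^ 2 = (8 + (3 * w - 1) ^ 2) / 8 := by
    rw [div_pow, mul_pow, h22]; ring
  rw [e1, e2]
  have p3 : 0 < 9 * w ^ 4 + 14 * w ^ 2 + 9 := by positivity
  field_simp
  ring

noncomputable def HH (θ : ℝ) : ℝ :=
  2 * cos θ * arctan (qq (sin θ)) + (sin θ * log (1 - 2 * sin θ + cos θ * qq (sin θ))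
    - sin θ * log (sin θ) - sin θ * (log (2 - 4 * sin θ + 3 * sin θ ^ 2) / 2))
    + PP (qq (sin θ) / cos θ)

lemma dHH {θ : ℝ} (hθ : θ ∈ Ioo 0 (arcsin (1 / 3))) :
    HasDerivAt HH (-2 * sin θ * arctan (qq (sin θ)) + cos θ * gg (sin θ) (cos θ)) θ := by
  obtain ⟨hs, hs1, hc, hθ2⟩ := th_bounds hθ
  have h1 := sin_sq_add_cos_sq θ
  have hq := qq_sq hs1.le
  have hqp : 0 < (1 - sin θ) * (1 - 3 * sin θ) := mul_pos (by linarith) (by linarith)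
  have hq0 : 0 < qq (sin θ) := Real.sqrt_pos.2 hqp
  have ds := hasDerivAt_sin θ
  have dc := hasDerivAt_cos θ
  have dq : HasDerivAt (fun θ => qq (sin θ)) ((3 * sin θ - 2) * cos θ / qq (sin θ)) θ := by
    have := (((ds.const_sub 1).mul ((ds.const_mul 3).const_sub 1))).sqrt hqp.ne'
    convert! this using 1
    simp only [Pi.mul_apply]
    change _ = _ / (2 * qq (sin θ))
    field_simp
    ring
  have hd0 : 0 < 2 - 4 * sin θ + 3 * sin θ ^ 2 := by nlinarith
  have hpos : 0 < 1 - 2 * sin θ + cos θ * qq (sin θ) := by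
    have : 0 < cos θ * qq (sin θ) := by positivity
    linarith
  have da := (dc.const_mul 2).mul dq.arctan
  have dl1 := ds.mul ((((ds.const_mul 2).const_sub 1).add (dc.mul dq)).log hpos.ne')
  have dl2 := ds.mul (ds.log hs.ne')
  have dd : HasDerivAt (fun θ => 2 - 4 * sin θ + 3 * sin θ ^ 2) (-4 * cos θ + 6 * sin θ * cos θ) θ := by
    convert! ((ds.const_mul 4).const_sub 2).add ((ds.pow 2).const_mul 3) using 1
    push_cast; ring
  have dl3 := ds.mul ((dd.log hd0.ne').div_const 2)
  have dP := (dPP (qq (sin θ) / cos θ)).comp θ (dq.div dc hc.ne')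
  convert! (da.add ((dl1.sub dl2).sub dl3)).add dP using 1
  simp only [Pi.add_apply, Pi.mul_apply]
  unfold gg
  set s := sin θ
  set c := cos θ
  set q := qq s
  have hcc : c ^ 2 = 1 - s ^ 2 := by linarith
  have h1s : 0 < 1 - s := by linarith
  have hd : 1 + q ^ 2 = 2 - 4 * s + 3 * s ^ 2 := by rw [hq]; ring
  -- derivative of w
  have hw' : ((3 * s - 2) * c / q * c - q * -s) / c ^ 2 = -2 * (1 - s) / (q * (1 + s)) := by
    have hc0 : (0:ℝ) < 1 - s ^ 2 := by rw [← hcc]; positivity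
    have : (3 * s - 2) * c / q * c - q * -s = ((3 * s - 2) * c ^ 2 + q ^ 2 * s) / q := by
      field_simp; ring
    rw [this, hq, hcc, div_div, div_eq_div_iff (by positivity) (by positivity)]
    ring
  have hw2 : (q / c) ^ 2 = (1 - 3 * s) / (1 + s) := by
    have hc0 : (0:ℝ) < 1 - s ^ 2 := by rw [← hcc]; positivity
    rw [div_pow, hq, hcc, div_eq_div_iff (by positivity) (by positivity)]
    ring
  have hPv : -24 * (1 + (q / c) ^ 2) / (9 * (q / c) ^ 4 + 14 * (q / c) ^ 2 + 9) *
      (((3 * s - 2) * c / q * c - q * -s) / c ^ 2) = 6 * (1 - s) ^ 2 / (q * (2 - 4 * s + 3 * s ^ 2)) := by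
    rw [hw', show (q / c) ^ 4 = ((q / c) ^ 2) ^ 2 by ring, hw2]
    have : 9 * ((1 - 3 * s) / (1 + s)) ^ 2 + 14 * ((1 - 3 * s) / (1 + s)) + 9 =
      16 * (2 - 4 * s + 3 * s ^ 2) / (1 + s) ^ 2 := by field_simp; ring
    rw [this]
    have : 1 + (1 - 3 * s) / (1 + s) = 2 * (1 - s) / (1 + s) := by field_simp; ring
    rw [this]
    field_simp
    ring
  have hz : (c * q) ^ 2 = (1 - s ^ 2) * ((1 - s) * (1 - 3 * s)) := by rw [mul_pow, hcc, hq]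
  have hg : (-(2 * c) + (-s * q + c * ((3 * s - 2) * c / q))) / (1 - 2 * s + c * q) =
      c / s + (-4 * c + 6 * s * c) / (2 - 4 * s + 3 * s ^ 2) / 2
       - 2 * (1 - 2 * s + 3 * s ^ 2) * (1 - s) / (s * q * (2 - 4 * s + 3 * s ^ 2)) := by
    have hN : -(2 * c) + (-s * q + c * ((3 * s - 2) * c / q)) =
        -2 * (c * q + (1 - s) * (1 - 3 * s ^ 2)) / q := by
      field_simp
      rw [hq, hcc]
      ring
    have hRr : c / s + (-4 * c + 6 * s * c) / (2 - 4 * s + 3 * s ^ 2) / 2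
       - 2 * (1 - 2 * s + 3 * s ^ 2) * (1 - s) / (s * q * (2 - 4 * s + 3 * s ^ 2)) =
       (c * q * (2 - 6 * s + 6 * s ^ 2) - 2 * (1 - s) * (1 - 2 * s + 3 * s ^ 2)) / (s * q * (2 - 4 * s + 3 * s ^ 2)) := by
      have key : ∀ d : ℝ, 0 < d → d = 2 - 4 * s + 3 * s ^ 2 →
          c / s + (-4 * c + 6 * s * c) / d / 2 - 2 * (1 - 2 * s + 3 * s ^ 2) * (1 - s) / (s * q * d) =
          (c * q * (2 - 6 * s + 6 * s ^ 2) - 2 * (1 - s) * (1 - 2 * s + 3 * s ^ 2)) / (s * q * d) := by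
        intro d hd' hde
        field_simp
        rw [hde]
        ring
      exact key _ hd0 rfl
    rw [hN, hRr, div_div, div_eq_div_iff (by positivity) (by positivity)]
    linear_combination (-(q * (2 - 6 * s + 6 * s ^ 2))) * hz
  rw [hPv, hd, hg]
  have hA : 2 * c * (1 / (2 - 4 * s + 3 * s ^ 2) * ((3 * s - 2) * c / q)) =
    2 * (1 - s ^ 2) * (3 * s - 2) / (q * (2 - 4 * s + 3 * s ^ 2)) := by
    rw [← hcc]; field_simp
  rw [hA]
  field_simp
  ring

lemma cHH : ContinuousOn HH (Icc 0 (arcsin (1 / 3))) := by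
  have hb : ∀ θ ∈ Icc 0 (arcsin (1 / 3)), 0 ≤ sin θ ∧ sin θ ≤ 1 / 3 ∧ 0 < cos θ := by
    intro θ h
    have h2 := h.2.trans (arcsin_le_pi_div_two _)
    have a1 := sin_nonneg_I ⟨h.1, h2⟩
    have a2 := (le_arcsin_iff_sin_le ⟨by linarith [h.1, Real.pi_pos], h2⟩ ⟨by norm_num, by norm_num⟩).1 h.2
    refine ⟨a1, a2, lt_of_le_of_ne (cos_nonneg_I ⟨h.1, h2⟩) ?_⟩
    intro h0
    have := sin_sq_add_cos_sq θ
    rw [← h0] at this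
    nlinarith
  have hqc : Continuous fun θ => qq (sin θ) := by unfold qq; fun_prop
  have hPc : Continuous PP := by unfold PP; fun_prop
  have hac : Continuous fun θ => arctan (qq (sin θ)) := continuous_arctan.comp hqc
  unfold HH
  refine ContinuousOn.add (ContinuousOn.add ?_ (ContinuousOn.sub (ContinuousOn.sub ?_ ?_) ?_)) ?_
  · fun_prop
  · refine ContinuousOn.mul (by fun_prop) (ContinuousOn.log (by fun_prop) ?_)
    intro θ h
    obtain ⟨a, b, c⟩ := hb θ h
    have : 0 ≤ cos θ * qq (sin θ) := mul_nonneg c.le (qq_nonneg _)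
    linarith
  · exact (continuous_mul_log.comp continuous_sin).continuousOn
  · refine ContinuousOn.mul (by fun_prop) (ContinuousOn.div_const (ContinuousOn.log (by fun_prop) ?_) _)
    intro θ h
    obtain ⟨a, b, c⟩ := hb θ h
    nlinarith
  · exact hPc.comp_continuousOn (ContinuousOn.div hqc.continuousOn (by fun_prop) fun θ h => (hb θ h).2.2.ne')

lemma HH_end : HH (arcsin (1 / 3)) = 0 := by
  unfold HH
  rw [sin_arcsin (by norm_num) (by norm_num)]
  have : qq (1 / 3) = 0 := by unfold qq; norm_num
  rw [this]
  unfold PP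
  have h3 : (2 - 4 * (1 / 3) + 3 * (1 / 3) ^ 2 : ℝ) = 1 := by norm_num
  have h4 : (1 - 2 * (1 / 3) + cos (arcsin (1 / 3)) * 0 : ℝ) = 1 / 3 := by norm_num
  rw [h3, h4]
  have h5 : ((3 * (0 / cos (arcsin (1 / 3))) - 1) / (2 * √2) : ℝ) =
     -((3 * (0 / cos (arcsin (1 / 3))) + 1) / (2 * √2)) := by ring
  rw [h5, arctan_neg]
  simp

lemma HH_zero : HH 0 = π / 2 - √2 * (π / 2) := by
  have h2 : (0:ℝ) < √2 := by positivity
  have h22 : √2 * √2 = (2:ℝ) := Real.mul_self_sqrt (by norm_num)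
  have : qq 0 = 1 := by unfold qq; norm_num
  unfold HH
  rw [sin_zero, cos_zero, this]
  unfold PP
  have e1 : ((3 * (1 / 1) + 1) / (2 * √2) : ℝ) = √2 := by
    rw [div_eq_iff (by positivity)]; linarith
  have e2 : ((3 * (1 / 1) - 1) / (2 * √2) : ℝ) = (√2)⁻¹ := by
    rw [div_eq_iff (by positivity)]; field_simp; norm_num
  rw [e1, e2, arctan_inv_of_pos h2]
  simp
  ring

lemma partD : ∫ θ in (0:ℝ)..(π / 2), ∫ φ in (0:ℝ)..(π / 2),
    max ((1 - sin θ) * sin φ - (sin θ * sin φ + √(sin θ ^ 2 * sin φ ^ 2 + cos φ ^ 2))) 0 * sin φ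
      = (√2 * (π / 2) - π / 2 - π / 2 * arcsin (1 / 3)) / 2 := by
  set Q := fun θ => ∫ φ in (0:ℝ)..(π / 2),
    max ((1 - sin θ) * sin φ - (sin θ * sin φ + √(sin θ ^ 2 * sin φ ^ 2 + cos φ ^ 2))) 0 * sin φ with hQ
  have hQc : Continuous Q := cont_param _ (by unfold Function.uncurry; fun_prop)
  have h0 : 0 ≤ arcsin (1 / 3) := arcsin_nonneg.2 (by norm_num)
  have h2 := arcsin_le_pi_div_two (1 / 3)
  rw [← intervalIntegral.integral_add_adjacent_intervals (b := arcsin (1 / 3))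
    (hQc.intervalIntegrable _ _) (hQc.intervalIntegrable _ _)]
  have i2 : ∫ θ in (arcsin (1 / 3))..(π / 2), Q θ = 0 := by
    rw [intervalIntegral.integral_congr (g := fun _ => (0:ℝ))]
    · simp
    intro θ hθ
    rw [uIcc_of_le h2] at hθ
    have hsθ := (arcsin_le_iff_le_sin ⟨by norm_num, by norm_num⟩
      ⟨by linarith [hθ.1, Real.pi_pos], hθ.2⟩).1 hθ.1
    simp only [hQ]
    rw [intervalIntegral.integral_congr (g := fun _ => (0:ℝ))]
    · simp
    intro φ hφ
    rw [uIcc_of_le (by positivity)] at hφ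
    simp only
    rw [max_zero_of_ge hsθ (sin_nonneg_I hφ), zero_mul]
  obtain ⟨hB1, hB2⟩ := lemB
  set G := fun θ => gg (sin θ) (cos θ) / cos θ - arctan (qq (sin θ)) with hG
  have hGi : IntervalIntegrable G volume 0 (arcsin (1 / 3)) :=
    (intervalIntegrable_iff_integrableOn_Ioo_of_le h0).2 hB1
  have hGv : ∫ t in (0:ℝ)..(arcsin (1 / 3)), G t = π / 2 * arcsin (1 / 3) := by
    rw [intervalIntegral.integral_of_le h0, integral_Ioc_eq_integral_Ioo, hB2]
  have key := intervalIntegral.integral_eq_sub_of_hasDerivAt_of_le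
    (f := HH) (f' := fun θ => 2 * Q θ + G θ) h0 cHH ?_
    (((hQc.intervalIntegrable _ _).const_mul 2).add hGi)
  · rw [intervalIntegral.integral_add ((hQc.intervalIntegrable _ _).const_mul 2) hGi,
      intervalIntegral.integral_const_mul, hGv, HH_end, HH_zero] at key
    rw [i2]
    linarith
  · intro θ hθ
    obtain ⟨hs, hs1, hc, hθ2⟩ := th_bounds hθ
    convert! dHH hθ using 1
    simp only [hQ, hG]
    rw [innerD hs hs1 hc (sin_sq_add_cos_sq θ)]
    have hcc : sin θ ^ 2 = 1 - cos θ ^ 2 := by linarith [sin_sq_add_cos_sq θ]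
    rw [hcc]
    field_simp
    ring

/-- the direct mean-width double integral for Example 3 equals
(π/4)(√2 + arccos(1/3)). -/
theorem mean_width_example_three_direct :
    (∫ θ in (0 : ℝ)..(Real.pi / 2), ∫ φ in (0 : ℝ)..(Real.pi / 2),
        max ((1 - Real.sin θ) * Real.sin φ)
            (Real.sin θ * Real.sin φ
              + Real.sqrt (Real.sin θ ^ 2 * Real.sin φ ^ 2 + Real.cos φ ^ 2))
          * Real.sin φ) =
      (Real.pi / 4) * (Real.sqrt 2 + Real.arccos (1 / 3)) := by
  have hsplit : ∀ θ : ℝ, (∫ φ in (0 : ℝ)..(π / 2),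
        max ((1 - sin θ) * sin φ)
            (sin θ * sin φ + √(sin θ ^ 2 * sin φ ^ 2 + cos φ ^ 2)) * sin φ) =
      (∫ φ in (0:ℝ)..(π / 2),
        (sin θ * sin φ + √(sin θ ^ 2 * sin φ ^ 2 + cos φ ^ 2)) * sin φ) +
      ∫ φ in (0:ℝ)..(π / 2),
        max ((1 - sin θ) * sin φ - (sin θ * sin φ + √(sin θ ^ 2 * sin φ ^ 2 + cos φ ^ 2))) 0 * sin φ := by
    intro θ
    rw [← intervalIntegral.integral_add (Continuous.intervalIntegrable (by fun_prop) _ _)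
      (Continuous.intervalIntegrable (by fun_prop) _ _)]
    congr 1
    ext φ
    have : ∀ a b : ℝ, max a b = b + max (a - b) 0 := by
      intro a b
      rw [← max_add_add_left]
      simp
    rw [this]
    ring
  simp_rw [hsplit]
  rw [intervalIntegral.integral_add, partQ, partD, arccos_eq_pi_div_two_sub_arcsin]
  · ring
  · exact (cont_param _ (by unfold Function.uncurry; fun_prop)).intervalIntegrable _ _
  · exact (cont_param _ (by unfold Function.uncurry; fun_prop)).intervalIntegrable _ _
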